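/- A cubic graph G has a nowhere-zero 5-flow if and only if G admits a balanced valuation taking only the values −5/3 and +5/3; equivalently, if and only if there is a partition V(G) = A ∪ B such that (5/3)·| |X∩A| − |X∩B| | ≤ |∂_G(X)| for every X ⊆ V(G). -/

import Mathlib

open SimpleGraph

variable {V : Type*}

/-- The set of edges of `G` with exactly one end in `S`: the edge-cut `∂_G(S)`. -/
def edgeCut (G : SimpleGraph V) (S : Set V) : Set (Sym2 V) :=
  {e | e ∈ G.edgeSet ∧ ∃ a b, e = s(a, b) ∧ a ∈ S ∧ b ∉ S}

/-- The set of edges of `G` with one end in `S` and the other end in `T`. -/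
def edgesBetween (G : SimpleGraph V) (S T : Set V) : Set (Sym2 V) :=
  {e | e ∈ G.edgeSet ∧ ∃ a b, e = s(a, b) ∧ a ∈ S ∧ b ∈ T}

/-- A graph is cubic if every vertex has degree 3. -/
def IsCubic (G : SimpleGraph V) : Prop :=
  ∀ v, (G.neighborSet v).ncard = 3

/-- A graph is bridgeless if no edge is a bridge. -/
def Bridgeless (G : SimpleGraph V) : Prop :=
  ∀ e ∈ G.edgeSet, ¬ G.IsBridge e

/-- `G` has a circuit all of whose vertices lie in `S`. -/
def HasCycleIn (G : SimpleGraph V) (S : Set V) : Prop :=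
  ∃ (v : V) (p : G.Walk v v), p.IsCycle ∧ ∀ x ∈ p.support, x ∈ S

/-- `G` is cyclically `k`-edge-connected: there is no edge-cut with fewer than `k` edges
whose deletion leaves at least two components each containing a circuit. -/
def CyclicallyEdgeConnected (G : SimpleGraph V) (k : ℕ) : Prop :=
  ∀ S : Set V, HasCycleIn G S → HasCycleIn G Sᶜ → k ≤ (edgeCut G S).ncard

/-- `F` is a 2-factor of `G`: a spanning subgraph in which every vertex has degree 2. -/
def IsTwoFactor (G F : SimpleGraph V) : Prop :=
  F ≤ G ∧ ∀ v, (F.neighborSet v).ncard = 2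

/-- The number of connected components of odd cardinality (odd circuits of a 2-factor). -/
noncomputable def oddComponents (F : SimpleGraph V) : ℕ :=
  {C : F.ConnectedComponent | Odd C.supp.ncard}.ncard

/-- `G` has a nowhere-zero `k`-flow: an orientation and an assignment of values in
`{1, …, k-1}` to the edges satisfying Kirchhoff's law at every vertex, encoded as a
skew-symmetric function on ordered pairs of adjacent vertices. -/
def HasNowhereZeroFlow [Fintype V] (G : SimpleGraph V) (k : ℕ) : Prop :=
  ∃ f : V → V → ℤ,
    (∀ v w, f v w = - f w v) ∧
    (∀ v w, G.Adj v w → f v w ≠ 0 ∧ (f v w).natAbs < k) ∧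
    (∀ v w, ¬ G.Adj v w → f v w = 0) ∧
    (∀ v, ∑ w, f v w = 0)

/-- A balanced valuation of `G`. -/
def BalancedValuation (G : SimpleGraph V) (f : V → ℝ) : Prop :=
  ∀ X : Set V, |∑ᶠ v ∈ X, f v| ≤ ((edgeCut G X).ncard : ℝ)

/-- A canonical 4-edge-coloring of `G` w.r.t. the 2-factor `F`: the edges of the
complementary 1-factor get color 1; the edges of `F` get colors in {0,2,3}, properly
(adjacent edges of `F` get distinct colors, which forces the alternation of 2 and 3);
each odd circuit of `F` carries exactly one edge of color 0, each even circuit none. -/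
def IsCanonicalColoring (G F : SimpleGraph V) (c : Sym2 V → ℕ) : Prop :=
  (∀ e ∈ G.edgeSet, e ∉ F.edgeSet → c e = 1) ∧
  (∀ e ∈ F.edgeSet, c e = 0 ∨ c e = 2 ∨ c e = 3) ∧
  (∀ e ∈ F.edgeSet, ∀ f ∈ F.edgeSet, e ≠ f → (∃ v, v ∈ e ∧ v ∈ f) → c e ≠ c f) ∧
  (∀ C : F.ConnectedComponent,
    (Odd C.supp.ncard →
      {e | e ∈ F.edgeSet ∧ (∀ w ∈ e, w ∈ C.supp) ∧ c e = 0}.ncard = 1) ∧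
    (¬ Odd C.supp.ncard →
      {e | e ∈ F.edgeSet ∧ (∀ w ∈ e, w ∈ C.supp) ∧ c e = 0}.ncard = 0))

/-- The set of vertices of `G` at which color 2 is missing. -/
def missingTwo (G : SimpleGraph V) (c : Sym2 V → ℕ) : Set V :=
  {v | ∀ e ∈ G.edgeSet, v ∈ e → c e ≠ 2}

/-- The spanning subgraph of `G` induced by the edges of colors 1 and 2. -/
def colorSubgraph (G : SimpleGraph V) (c : Sym2 V → ℕ) : SimpleGraph V :=
  SimpleGraph.fromEdgeSet {e | e ∈ G.edgeSet ∧ (c e = 1 ∨ c e = 2)}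

/-- The edge type of the multigraph `M_G`: the edges of `G` together with, for each
`i ∈ {1,…,t}`, two parallel edges `f'_i = (i, false)` and `f_i = (i, true)` joining
`z_{2i-1}` and `z_{2i}`. -/
abbrev MEdge (G : SimpleGraph V) (t : ℕ) := G.edgeSet ⊕ (Fin t × Bool)

/-- Reference directions for the edges of `M_G`: `dir` is a fixed choice of direction
for each edge of `G`, and the added edge `(i, b)` is directed from `za i` to `zb i`. -/
def mEnds (G : SimpleGraph V) (dir : G.edgeSet → V × V) {t : ℕ} (za zb : Fin t → V) :
    MEdge G t → V × V
  | .inl e => dir e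
  | .inr (i, _) => (za i, zb i)

/-- Kirchhoff's law for a signed flow on a multigraph with reference directions. -/
def Conserves {E : Type*} (ends : E → V × V) (ψ : E → ℤ) : Prop :=
  ∀ v : V, ∑ᶠ e ∈ {e | (ends e).1 = v}, ψ e = ∑ᶠ e ∈ {e | (ends e).2 = v}, ψ e

/-- The decomposition data of a canonical nowhere-zero 4-flow on `M_G`:
`ψ₁` is a flow of constant absolute value 2 around the circuits of the 2-factor `F`;
`ψ₂` is a flow of constant absolute value 1 around the circuits of the 2-factor of `M_G`
induced by colors 1 and 2 (the edges `f'_i` included);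
`ψ₃` is a flow of constant absolute value 1 around each 2-circuit `{f_i, f'_i}`, directed
so that `f'_i` gets the same direction as in `ψ₂`. -/
def IsCanonicalDecomp (G F : SimpleGraph V) (c : Sym2 V → ℕ)
    (dir : G.edgeSet → V × V) {t : ℕ} (za zb : Fin t → V)
    (ψ₁ ψ₂ ψ₃ : MEdge G t → ℤ) : Prop :=
  Conserves (mEnds G dir za zb) ψ₁ ∧
  Conserves (mEnds G dir za zb) ψ₂ ∧
  Conserves (mEnds G dir za zb) ψ₃ ∧
  (∀ e : G.edgeSet, (e : Sym2 V) ∈ F.edgeSet → (ψ₁ (Sum.inl e)).natAbs = 2) ∧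
  (∀ e : G.edgeSet, (e : Sym2 V) ∉ F.edgeSet → ψ₁ (Sum.inl e) = 0) ∧
  (∀ p : Fin t × Bool, ψ₁ (Sum.inr p) = 0) ∧
  (∀ e : G.edgeSet, (c (e : Sym2 V) = 1 ∨ c (e : Sym2 V) = 2) → (ψ₂ (Sum.inl e)).natAbs = 1) ∧
  (∀ e : G.edgeSet, ¬ (c (e : Sym2 V) = 1 ∨ c (e : Sym2 V) = 2) → ψ₂ (Sum.inl e) = 0) ∧
  (∀ i : Fin t, (ψ₂ (Sum.inr (i, false))).natAbs = 1) ∧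
  (∀ i : Fin t, ψ₂ (Sum.inr (i, true)) = 0) ∧
  (∀ e : G.edgeSet, ψ₃ (Sum.inl e) = 0) ∧
  (∀ i : Fin t, ψ₃ (Sum.inr (i, false)) = ψ₂ (Sum.inr (i, false))) ∧
  (∀ i : Fin t, (ψ₃ (Sum.inr (i, true))).natAbs = 1)

/-- A canonical nowhere-zero 4-flow on `M_G` is a sum of three flows as above. -/
def IsCanonicalFourFlow (G F : SimpleGraph V) (c : Sym2 V → ℕ)
    (dir : G.edgeSet → V × V) {t : ℕ} (za zb : Fin t → V)
    (ψ : MEdge G t → ℤ) : Prop :=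
  ∃ ψ₁ ψ₂ ψ₃ : MEdge G t → ℤ,
    (∀ e, ψ e = ψ₁ e + ψ₂ e + ψ₃ e) ∧ IsCanonicalDecomp G F c dir za zb ψ₁ ψ₂ ψ₃

/-- The outdegree of `v` in the orientation `D` induced by the signed flow `ψ`. -/
noncomputable def mOutDeg {E : Type*} (ends : E → V × V) (ψ : E → ℤ) (v : V) : ℕ :=
  {e | ((ends e).1 = v ∧ 0 < ψ e) ∨ ((ends e).2 = v ∧ ψ e < 0)}.ncard

/-- The degree of `v` in the multigraph with endpoint map `ends`. -/
noncomputable def mDeg {E : Type*} (ends : E → V × V) (v : V) : ℕ :=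
  {e | (ends e).1 = v ∨ (ends e).2 = v}.ncard

/-- The class `A` (white vertices) of the flow partition induced by `ψ`. -/
def partA {E : Type*} (ends : E → V × V) (ψ : E → ℤ) : Set V :=
  {v | 2 * mOutDeg ends ψ v < mDeg ends v}

/-- The class `B` (black vertices) of the flow partition induced by `ψ`. -/
def partB {E : Type*} (ends : E → V × V) (ψ : E → ℤ) : Set V :=
  {v | mDeg ends v < 2 * mOutDeg ends ψ v}

/-- A 6-edge-cut `Ecut` is bad w.r.t. a flow partition `(A, B)`: it has exactly four
edges of color 1 and two edges of color 2, and it separates `{z1,z2,z3,z4}` into two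
pairs lying in different components of `G - Ecut`, one pair contained in `A` or in `B`. -/
def IsBadCut (G : SimpleGraph V) (c : Sym2 V → ℕ) (z1 z2 z3 z4 : V)
    (Ecut : Set (Sym2 V)) (A B : Set V) : Prop :=
  {e ∈ Ecut | c e = 1}.ncard = 4 ∧ {e ∈ Ecut | c e = 2}.ncard = 2 ∧
  ∃ p q r s : V, ({p, q, r, s} : Set V) = {z1, z2, z3, z4} ∧
    ({p, q} : Set V) ∩ {r, s} = ∅ ∧ p ≠ q ∧ r ≠ s ∧
    (G.deleteEdges Ecut).Reachable p q ∧ (G.deleteEdges Ecut).Reachable r s ∧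
    ¬ (G.deleteEdges Ecut).Reachable p r ∧
    (({p, q} : Set V) ⊆ A ∨ ({p, q} : Set V) ⊆ B)

/-!
Let `A` be the adjacency matrix of `G` and let `o` be the `±1`-valued orientation in which a
`k`-flow `f` is positive. Then `|k • o - 2 • f| ≤ (k - 2) • A` entrywise. Summing over a cut
kills `f` and leaves `k * |∑ v ∈ X, p v| ≤ (k - 2) * |∂ X|`, where `p` is the net outdegree of `o`.

Conversely, Hoffman's circulation theorem is used twice: it produces an orientation `o` with net
outdegree `p`, and then a flow whose value on every arc of `o` lies in `[1, k - 1]`. For both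
applications the cut condition reduces to the inequality above.

At a vertex of degree 3 the net outdegree is odd and the inequality excludes `±3`, so it is `±1`.
-/

section CutSum

variable [Fintype V] [DecidableEq V] {M : Type*}

/-- The total capacity of the arcs leaving `X`, where `c u w` is the capacity of the arc from `u`
to `w`. -/
def cutSum [AddCommMonoid M] (c : V → V → M) (X : Finset V) : M :=
  ∑ e ∈ X ×ˢ Xᶜ, c e.1 e.2

theorem sum_sum_eq_cutSum_of_skew [AddCommGroup M] [IsAddTorsionFree M] {g : V → V → M}
    (hg : ∀ v w, g v w = -g w v) (X : Finset V) :
    ∑ v ∈ X, ∑ w, g v w = cutSum g X := by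
  have inner_eq_zero : ∑ v ∈ X, ∑ w ∈ X, g v w = 0 := by
    rw [← self_eq_neg]
    calc ∑ v ∈ X, ∑ w ∈ X, g v w = ∑ w ∈ X, ∑ v ∈ X, -g w v := by
          rw [Finset.sum_comm]
          exact Finset.sum_congr rfl fun w _ => Finset.sum_congr rfl fun v _ => hg v w
      _ = -∑ v ∈ X, ∑ w ∈ X, g v w := by simp only [Finset.sum_neg_distrib]
  calc ∑ v ∈ X, ∑ w, g v w = ∑ v ∈ X, ∑ w ∈ X, g v w + ∑ v ∈ X, ∑ w ∈ Xᶜ, g v w := by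
        simp only [← Finset.sum_add_distrib, Finset.sum_add_sum_compl]
    _ = cutSum g X := by rw [inner_eq_zero, zero_add, cutSum, Finset.sum_product]

theorem cutSum_inter_add_cutSum_union [AddCommMonoid M] (c : V → V → M) (X Y : Finset V) :
    cutSum c (X ∩ Y) + cutSum c (X ∪ Y) + ∑ e ∈ (X \ Y) ×ˢ (Y \ X), (c e.1 e.2 + c e.2 e.1) =
      cutSum c X + cutSum c Y := by
  have swap : ∑ e ∈ (X \ Y) ×ˢ (Y \ X), c e.2 e.1 = ∑ e ∈ (Y \ X) ×ˢ (X \ Y), c e.1 e.2 := by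
    simp only [Finset.sum_product]
    exact Finset.sum_comm
  rw [Finset.sum_add_distrib, swap]
  simp only [cutSum]
  simp only [← Finset.sum_ite_mem_eq (_ ×ˢ _), ← Finset.sum_add_distrib]
  refine Finset.sum_congr rfl fun e _ => ?_
  by_cases e.1 ∈ X <;> by_cases e.2 ∈ X <;> by_cases e.1 ∈ Y <;> by_cases e.2 ∈ Y <;>
    simp [*, add_comm]

theorem cutSum_inter_add_cutSum_union_add_le [AddCommMonoid M] [PartialOrder M]
    [IsOrderedAddMonoid M] {c : V → V → M} (hc : ∀ v w, 0 ≤ c v w + c w v) {X Y : Finset V}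
    {v w : V} (hv : v ∈ X \ Y) (hw : w ∈ Y \ X) :
    cutSum c (X ∩ Y) + cutSum c (X ∪ Y) + (c v w + c w v) ≤ cutSum c X + cutSum c Y := by
  rw [← cutSum_inter_add_cutSum_union c X Y]
  gcongr
  exact Finset.single_le_sum (f := fun e : V × V => c e.1 e.2 + c e.2 e.1)
    (fun e _ => hc e.1 e.2) (Finset.mk_mem_product hv hw)

theorem cutSum_add [AddCommMonoid M] (c d : V → V → M) (X : Finset V) :
    cutSum (fun v w => c v w + d v w) X = cutSum c X + cutSum d X :=
  Finset.sum_add_distrib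

theorem cutSum_sub [AddCommGroup M] (c d : V → V → M) (X : Finset V) :
    cutSum (fun v w => c v w - d v w) X = cutSum c X - cutSum d X :=
  Finset.sum_sub_distrib ..

theorem cutSum_const_mul [NonUnitalNonAssocSemiring M] (a : M) (c : V → V → M) (X : Finset V) :
    cutSum (fun v w => a * c v w) X = a * cutSum c X :=
  (Finset.mul_sum _ _ _).symm

theorem cutSum_single [AddCommMonoid M] (v w : V) (a : M) (X : Finset V) :
    cutSum (Pi.single v (Pi.single w a)) X = if v ∈ X ∧ w ∉ X then a else 0 := by
  have apply_eq (e : V × V) :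
      (Pi.single v (Pi.single w a) : V → V → M) e.1 e.2 = if e = (v, w) then a else 0 := by
    by_cases h₁ : e.1 = v <;> by_cases h₂ : e.2 = w <;> simp [Prod.ext_iff, h₁, h₂]
  simp only [cutSum, apply_eq, Finset.sum_ite_eq', Finset.mem_product, Finset.mem_compl]

end CutSum

section Circulation

variable [Fintype V] [DecidableEq V]

/-- Hoffman's cut conditions for a skew-symmetric flow `g ≤ c` with net outflow `b`. Capacities
may be negative: since `g v w = -g w v`, the capacity `c w v` acts as the lower bound `-c w v` on
the arc from `v` to `w`. -/
structure IsFeasible (b : V → ℤ) (c : V → V → ℤ) : Prop where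
  add_swap_nonneg : ∀ v w, 0 ≤ c v w + c w v
  sum_le_cutSum : ∀ X : Finset V, ∑ v ∈ X, b v ≤ cutSum c X

variable {b : V → ℤ} {c : V → V → ℤ}

theorem IsFeasible.exists_minimal_le (hc : IsFeasible b c) :
    ∃ d ≤ c, Minimal (IsFeasible b) d := by
  let lower : V → V → ℤ := fun v w => -c w v
  have finite : {d | IsFeasible b d ∧ d ≤ c}.Finite :=
    (Set.finite_Icc lower c).subset fun d ⟨hd, hdc⟩ => ⟨fun v w => by
      have := hd.add_swap_nonneg v w
      have : d w v ≤ c w v := hdc w v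
      simp only [lower]
      omega, hdc⟩
  obtain ⟨d, hdc, hd⟩ := finite.exists_le_minimal ⟨hc, le_rfl⟩
  exact ⟨d, hdc, hd.prop.1, fun d' hd' h => hd.le_of_le ⟨hd', h.trans hdc⟩ h⟩

theorem exists_cutSum_le_of_minimal_isFeasible (hc : Minimal (IsFeasible b) c) {v w : V}
    (hvw : 0 < c v w + c w v) : ∃ X : Finset V, v ∈ X ∧ w ∉ X ∧ cutSum c X ≤ ∑ v ∈ X, b v := by
  by_contra! not_tight
  let δ : V → V → ℤ := Pi.single v (Pi.single w 1)
  have δ_apply (x y : V) : δ x y = if x = v ∧ y = w then 1 else 0 := by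
    by_cases h₁ : x = v <;> by_cases h₂ : y = w <;> simp [δ, h₁, h₂]
  have lowered : IsFeasible b (c - δ) := by
    refine ⟨fun x y => ?_, fun X => ?_⟩
    · have := hc.prop.add_swap_nonneg x y
      simp only [Pi.sub_apply, δ_apply]
      grind
    · have := hc.prop.sum_le_cutSum X
      simp only [Pi.sub_def, cutSum_sub]
      rw [cutSum_single]
      split_ifs with h
      · exact Int.le_sub_one_of_lt (not_tight X h.1 h.2)
      · rwa [sub_zero]
  have lowered_le : c - δ ≤ c := sub_le_self c fun x y => by
    rw [δ_apply]
    split_ifs <;> simp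
  simpa [δ_apply] using hc.le_of_le lowered lowered_le v w

theorem skew_of_minimal_isFeasible (hc : Minimal (IsFeasible b) c) (v w : V) :
    c v w = -c w v := by
  by_contra hne
  have slack : 0 < c v w + c w v := by
    have := hc.prop.add_swap_nonneg v w
    omega
  obtain ⟨X, hvX, hwX, tightX⟩ := exists_cutSum_le_of_minimal_isFeasible hc slack
  obtain ⟨Y, hwY, hvY, tightY⟩ :=
    exists_cutSum_le_of_minimal_isFeasible hc (add_comm (c v w) _ ▸ slack)
  have submodular := cutSum_inter_add_cutSum_union_add_le hc.prop.add_swap_nonneg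
    (Finset.mem_sdiff.2 ⟨hvX, hvY⟩) (Finset.mem_sdiff.2 ⟨hwY, hwX⟩)
  have modular := Finset.sum_union_inter (s₁ := X) (s₂ := Y) (f := b)
  have := hc.prop.sum_le_cutSum (X ∩ Y)
  have := hc.prop.sum_le_cutSum (X ∪ Y)
  omega

/-- Hoffman's circulation theorem. -/
theorem IsFeasible.exists_skew_le (hc : IsFeasible b c) (hb : ∑ v, b v = 0) :
    ∃ g ≤ c, (∀ v w, g v w = -g w v) ∧ ∀ v, ∑ w, g v w = b v := by
  obtain ⟨g, hgc, hg⟩ := hc.exists_minimal_le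
  have skew := skew_of_minimal_isFeasible hg
  have outflow_ge (v : V) : b v ≤ ∑ w, g v w := by
    have := hg.prop.sum_le_cutSum {v}
    rwa [← sum_sum_eq_cutSum_of_skew skew, Finset.sum_singleton, Finset.sum_singleton] at this
  have total_eq : ∑ v, b v = ∑ v, ∑ w, g v w := by
    rw [hb, sum_sum_eq_cutSum_of_skew skew]
    simp [cutSum]
  have outflow_eq := (Finset.sum_eq_sum_iff_of_le fun v _ => outflow_ge v).1 total_eq
  exact ⟨g, hgc, skew, fun v => (outflow_eq v (Finset.mem_univ v)).symm⟩

end Circulation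

section Orientation

variable {G : SimpleGraph V} [DecidableRel G.Adj]

/-- A skew-symmetric `o` encodes an orientation of `G`: `o u w` is `1` if the edge `uw` is directed
from `u` to `w`, `-1` if it is directed from `w` to `u`, and `0` if there is no such edge. -/
structure IsOrientation (G : SimpleGraph V) [DecidableRel G.Adj] (o : V → V → ℤ) : Prop where
  skew : ∀ u w, o u w = -o w u
  abs_eq : ∀ u w, |o u w| = G.adjMatrix ℤ u w

theorem exists_isOrientation (G : SimpleGraph V) [DecidableRel G.Adj] :
    ∃ o, IsOrientation G o := by
  classical
  let := linearOrderOfSTO (WellOrderingRel (α := V))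
  refine ⟨fun u w => if G.Adj u w then if u < w then 1 else -1 else 0, fun u w => ?_, fun u w => ?_⟩
  · by_cases h : G.Adj u w
    · rcases lt_or_gt_of_ne h.ne with hlt | hlt <;> simp [h, h.symm, hlt, hlt.not_gt]
    · simp [h, G.adj_comm w u]
  · rw [adjMatrix_apply]
    split_ifs <;> simp

theorem isOrientation_sign {f : V → V → ℤ} (skew : ∀ v w, f v w = -f w v)
    (ne_zero : ∀ v w, G.Adj v w → f v w ≠ 0) (eq_zero : ∀ v w, ¬G.Adj v w → f v w = 0) :
    IsOrientation G fun v w => (f v w).sign where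
  skew v w := by rw [skew v w, Int.sign_neg]
  abs_eq v w := by
    rw [adjMatrix_apply]
    split_ifs with h
    · rcases lt_or_gt_of_ne (ne_zero v w h) with hf | hf
      · simp [Int.sign_eq_neg_one_of_neg hf]
      · simp [Int.sign_eq_one_of_pos hf]
    · simp [eq_zero v w h]

theorem sum_adjMatrix_apply [Fintype V] (G : SimpleGraph V) [DecidableRel G.Adj] (v : V) :
    ∑ w, G.adjMatrix ℤ v w = G.degree v := by
  simp [adjMatrix_apply, ← card_neighborFinset_eq_degree, neighborFinset_eq_filter]

theorem cutSum_adjMatrix [Fintype V] [DecidableEq V] (G : SimpleGraph V) [DecidableRel G.Adj]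
    (X : Finset V) :
    cutSum (fun u w => G.adjMatrix ℤ u w) X = (edgeCut G (X : Set V)).ncard := by
  have edgeCut_eq : edgeCut G (X : Set V) =
      ((G.interedges X Xᶜ).image fun e => s(e.1, e.2) : Finset (Sym2 V)) := by
    ext e
    simp only [edgeCut, Set.mem_ofPred_eq, Finset.mem_coe, Finset.mem_image, mem_interedges_iff,
      Finset.mem_compl, Prod.exists]
    constructor
    · rintro ⟨he, a, b, rfl, ha, hb⟩
      exact ⟨a, b, ⟨ha, hb, he⟩, rfl⟩
    · rintro ⟨a, b, ⟨ha, hb, he⟩, rfl⟩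
      exact ⟨he, a, b, rfl, ha, hb⟩
  have injOn : Set.InjOn (fun e : V × V => s(e.1, e.2)) (G.interedges X Xᶜ) := by
    rintro ⟨a, b⟩ hab ⟨a', b'⟩ hab' h
    simp only [Finset.mem_coe, mk_mem_interedges_iff, Finset.mem_compl] at hab hab'
    rcases Sym2.eq_iff.1 h with ⟨rfl, rfl⟩ | ⟨rfl, rfl⟩
    · rfl
    · exact absurd hab.1 hab'.2.1
  rw [edgeCut_eq, Set.ncard_coe_finset, Finset.card_image_of_injOn injOn, interedges_def]
  simp only [cutSum, adjMatrix_apply, Finset.sum_boole]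

namespace IsOrientation

variable {o : V → V → ℤ}

theorem eq_one_or_neg_one (ho : IsOrientation G o) {u w : V} (h : G.Adj u w) :
    o u w = 1 ∨ o u w = -1 :=
  eq_or_eq_neg_of_abs_eq <| by rw [ho.abs_eq, adjMatrix_apply, if_pos h]

theorem eq_zero (ho : IsOrientation G o) {u w : V} (h : ¬G.Adj u w) : o u w = 0 :=
  abs_eq_zero.1 <| by rw [ho.abs_eq, adjMatrix_apply, if_neg h]

theorem even_sub_adjMatrix (ho : IsOrientation G o) (u w : V) :
    Even (o u w - G.adjMatrix ℤ u w) := by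
  rw [← ho.abs_eq, Int.even_sub, even_abs]

theorem two_mul_posPart (ho : IsOrientation G o) (u w : V) :
    2 * (o u w)⁺ = o u w + G.adjMatrix ℤ u w := by
  rw [← ho.abs_eq, add_comm, abs_add_eq_two_nsmul_posPart, two_nsmul, two_mul]

theorem two_mul_sub (ho : IsOrientation G o) {g : V → V → ℤ} (skew : ∀ u w, g u w = -g w u)
    (hgo : ∀ u w, g u w ≤ (o u w)⁺) : IsOrientation G fun u w => 2 * g u w - o u w where
  skew u w := by rw [skew u w, ho.skew u w]; ring
  abs_eq u w := by
    have := skew u w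
    have := ho.skew u w
    have := ho.two_mul_posPart u w
    have := ho.two_mul_posPart w u
    have := hgo u w
    have := hgo w u
    have := G.isSymm_adjMatrix (α := ℤ) |>.apply u w
    by_cases h : G.Adj u w
    · have := ho.eq_one_or_neg_one h
      have adj_eq : G.adjMatrix ℤ u w = 1 := by rw [adjMatrix_apply, if_pos h]
      rw [adj_eq, _root_.abs_eq zero_le_one]
      omega
    · have := ho.eq_zero h
      have adj_eq : G.adjMatrix ℤ u w = 0 := by rw [adjMatrix_apply, if_neg h]
      rw [adj_eq, abs_eq_zero]
      omega

variable [Fintype V]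

theorem even_sum_sub_degree (ho : IsOrientation G o) (v : V) :
    Even (∑ w, o v w - G.degree v) := by
  rw [← sum_adjMatrix_apply, ← Finset.sum_sub_distrib]
  exact Finset.even_sum _ fun w _ => ho.even_sub_adjMatrix v w

theorem two_mul_cutSum_posPart [DecidableEq V] (ho : IsOrientation G o) (X : Finset V) :
    2 * cutSum (fun u w => (o u w)⁺) X =
      ∑ v ∈ X, ∑ w, o v w + (edgeCut G (X : Set V)).ncard := by
  rw [sum_sum_eq_cutSum_of_skew ho.skew, ← cutSum_adjMatrix, ← cutSum_const_mul, ← cutSum_add]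
  simp only [ho.two_mul_posPart]

end IsOrientation

theorem exists_isOrientation_sum_eq [Fintype V] {p : V → ℤ} (hp : ∑ v, p v = 0)
    (parity : ∀ v, Even (p v - G.degree v))
    (hcut : ∀ X : Finset V, ∑ v ∈ X, p v ≤ (edgeCut G (X : Set V)).ncard) :
    ∃ o, IsOrientation G o ∧ ∀ v, ∑ w, o v w = p v := by
  classical
  obtain ⟨r, hr⟩ := exists_isOrientation G
  have even_add (v : V) : Even (p v + ∑ w, r v w) := by
    have := hr.even_sum_sub_degree v
    have := parity v
    grind
  choose b hb using fun v => even_iff_exists_two_mul.1 (even_add v)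
  have two_mul_sum_b (X : Finset V) :
      2 * ∑ v ∈ X, b v = ∑ v ∈ X, p v + ∑ v ∈ X, ∑ w, r v w := by
    simp only [Finset.mul_sum, ← hb, Finset.sum_add_distrib]
  have feasible : IsFeasible b fun u w => (r u w)⁺ := by
    refine ⟨fun u w => add_nonneg (posPart_nonneg _) (posPart_nonneg _), fun X => ?_⟩
    have := two_mul_sum_b X
    have := hr.two_mul_cutSum_posPart X
    have := hcut X
    omega
  have sum_b : ∑ v, b v = 0 := by
    have := two_mul_sum_b Finset.univ
    have sum_r := sum_sum_eq_cutSum_of_skew hr.skew Finset.univ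
    simp only [cutSum, Finset.compl_univ, Finset.product_empty, Finset.sum_empty] at sum_r
    omega
  obtain ⟨g, hgr, skew, outflow⟩ := feasible.exists_skew_le sum_b
  refine ⟨fun u w => 2 * g u w - r u w, hr.two_mul_sub skew hgr, fun v => ?_⟩
  rw [Finset.sum_sub_distrib, ← Finset.mul_sum, outflow, ← hb, add_sub_cancel_right]

end Orientation

section Jaeger

variable {G : SimpleGraph V} [DecidableRel G.Adj] {k : ℕ}

theorem abs_mul_sign_sub_two_mul_le {x : ℤ} (hx : x ≠ 0) (hxk : x.natAbs < k) :
    |k * x.sign - 2 * x| ≤ (k : ℤ) - 2 := by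
  rw [abs_le]
  rcases lt_or_gt_of_ne hx with h | h
  · rw [Int.sign_eq_neg_one_of_neg h]
    omega
  · rw [Int.sign_eq_one_of_pos h]
    omega

theorem exists_mul_abs_sum_le_of_hasNowhereZeroFlow [Fintype V] (hG : HasNowhereZeroFlow G k) :
    ∃ p : V → ℤ, (∀ v, Even (p v - G.degree v)) ∧
      ∀ X : Finset V, k * |∑ v ∈ X, p v| ≤ ((k : ℤ) - 2) * (edgeCut G (X : Set V)).ncard := by
  classical
  obtain ⟨f, skew, bounds, eq_zero, conserves⟩ := hG
  have ho : IsOrientation G fun v w => (f v w).sign :=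
    isOrientation_sign skew (fun v w h => (bounds v w h).1) eq_zero
  refine ⟨_, ho.even_sum_sub_degree, fun X => ?_⟩
  have entry_le (u w : V) :
      |k * (f u w).sign - 2 * f u w| ≤ ((k : ℤ) - 2) * G.adjMatrix ℤ u w := by
    by_cases h : G.Adj u w
    · simpa [h] using abs_mul_sign_sub_two_mul_le (bounds u w h).1 (bounds u w h).2
    · simp [h, eq_zero u w h]
  have cutSum_f : cutSum f X = 0 := by
    rw [← sum_sum_eq_cutSum_of_skew skew, Finset.sum_eq_zero fun v _ => conserves v]
  calc k * |∑ v ∈ X, ∑ w, (f v w).sign|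
      = |k * cutSum (fun v w => (f v w).sign) X - 2 * cutSum f X| := by
        rw [sum_sum_eq_cutSum_of_skew ho.skew, cutSum_f, mul_zero, sub_zero, abs_mul, Nat.abs_cast]
    _ = |∑ e ∈ X ×ˢ Xᶜ, (k * (f e.1 e.2).sign - 2 * f e.1 e.2)| := by
        simp only [cutSum, Finset.mul_sum, Finset.sum_sub_distrib]
    _ ≤ ∑ e ∈ X ×ˢ Xᶜ, ((k : ℤ) - 2) * G.adjMatrix ℤ e.1 e.2 :=
        (Finset.abs_sum_le_sum_abs _ _).trans (Finset.sum_le_sum fun e _ => entry_le e.1 e.2)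
    _ = ((k : ℤ) - 2) * (edgeCut G (X : Set V)).ncard := by
        rw [← Finset.mul_sum, ← cutSum_adjMatrix]
        rfl

/-- The capacities forcing a flow to take values in `[1, k - 1]` on every arc of the orientation
`o` and to vanish on non-edges: capacity `k - 1` along an arc, `-1` against it, `0` elsewhere. -/
def flowCapacity (G : SimpleGraph V) [DecidableRel G.Adj] (k : ℕ) (o : V → V → ℤ) (u w : V) : ℤ :=
  k * (o u w)⁺ - G.adjMatrix ℤ u w

namespace IsOrientation

variable {o : V → V → ℤ}

theorem two_mul_flowCapacity (ho : IsOrientation G o) (u w : V) :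
    2 * flowCapacity G k o u w = k * o u w + ((k : ℤ) - 2) * G.adjMatrix ℤ u w := by
  rw [flowCapacity]
  linear_combination (k : ℤ) * ho.two_mul_posPart u w

theorem two_mul_flowCapacity_of_adj (ho : IsOrientation G o) {u w : V} (h : G.Adj u w) :
    2 * flowCapacity G k o u w = k * o u w + (k - 2) := by
  simpa [h] using ho.two_mul_flowCapacity u w

theorem flowCapacity_of_not_adj (ho : IsOrientation G o) {u w : V} (h : ¬G.Adj u w) :
    flowCapacity G k o u w = 0 := by
  simpa [h, ho.eq_zero h] using ho.two_mul_flowCapacity (k := k) u w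

theorem two_mul_cutSum_flowCapacity [Fintype V] [DecidableEq V] (ho : IsOrientation G o)
    (X : Finset V) : 2 * cutSum (flowCapacity G k o) X =
      k * ∑ v ∈ X, ∑ w, o v w + ((k : ℤ) - 2) * (edgeCut G (X : Set V)).ncard := by
  rw [sum_sum_eq_cutSum_of_skew ho.skew, ← cutSum_adjMatrix]
  simp only [← cutSum_const_mul, ← cutSum_add, ho.two_mul_flowCapacity]

theorem isFeasible_flowCapacity [Fintype V] [DecidableEq V] (ho : IsOrientation G o) (hk : 2 ≤ k)
    (hcut : ∀ X : Finset V,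
      k * |∑ v ∈ X, ∑ w, o v w| ≤ ((k : ℤ) - 2) * (edgeCut G (X : Set V)).ncard) :
    IsFeasible 0 (flowCapacity G k o) where
  add_swap_nonneg u w := by
    by_cases h : G.Adj u w
    · have along := ho.two_mul_flowCapacity_of_adj (k := k) h
      have against := ho.two_mul_flowCapacity_of_adj (k := k) h.symm
      rw [ho.skew w u, mul_neg] at against
      omega
    · rw [ho.flowCapacity_of_not_adj h, ho.flowCapacity_of_not_adj fun h' => h h'.symm, add_zero]
  sum_le_cutSum X := by
    have cut_le := hcut X
    have neg_le := neg_abs_le (k * ∑ v ∈ X, ∑ w, o v w)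
    rw [abs_mul, Nat.abs_cast] at neg_le
    have := ho.two_mul_cutSum_flowCapacity (k := k) X
    simp only [Pi.zero_apply, Finset.sum_const_zero]
    omega

theorem hasNowhereZeroFlow_of_le_flowCapacity [Fintype V] (ho : IsOrientation G o)
    {f : V → V → ℤ} (skew : ∀ u w, f u w = -f w u) (conserves : ∀ v, ∑ w, f v w = 0)
    (hf : ∀ u w, f u w ≤ flowCapacity G k o u w) : HasNowhereZeroFlow G k := by
  refine ⟨f, skew, fun u w h => ?_, fun u w h => ?_, conserves⟩
  · have := hf u w
    have := hf w u
    have := skew u w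
    have along := ho.two_mul_flowCapacity_of_adj (k := k) h
    have against := ho.two_mul_flowCapacity_of_adj (k := k) h.symm
    rw [ho.skew w u] at against
    rcases ho.eq_one_or_neg_one h with ho₁ | ho₁ <;> rw [ho₁] at along against <;> omega
  · have := (hf u w).trans_eq (ho.flowCapacity_of_not_adj h)
    have := (hf w u).trans_eq (ho.flowCapacity_of_not_adj fun h' => h h'.symm)
    have := skew u w
    omega

end IsOrientation

theorem hasNowhereZeroFlow_iff_exists_mul_abs_sum_le [Fintype V] (hk : 2 ≤ k) :
    HasNowhereZeroFlow G k ↔ ∃ p : V → ℤ, (∀ v, Even (p v - G.degree v)) ∧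
      ∀ X : Finset V, k * |∑ v ∈ X, p v| ≤ ((k : ℤ) - 2) * (edgeCut G (X : Set V)).ncard := by
  classical
  refine ⟨exists_mul_abs_sum_le_of_hasNowhereZeroFlow, fun ⟨p, parity, hcut⟩ => ?_⟩
  have k_pos : (0 : ℤ) < k := by omega
  have sum_p : ∑ v, p v = 0 := by
    have edgeCut_univ : edgeCut G (Set.univ : Set V) = ∅ := by simp [edgeCut]
    have := hcut Finset.univ
    rw [Finset.coe_univ, edgeCut_univ, Set.ncard_empty, Nat.cast_zero, mul_zero] at this
    exact abs_nonpos_iff.1 (nonpos_of_mul_nonpos_right this k_pos)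
  have sum_le (X : Finset V) : ∑ v ∈ X, p v ≤ (edgeCut G (X : Set V)).ncard := by
    refine (le_abs_self _).trans (le_of_mul_le_mul_left ((hcut X).trans ?_) k_pos)
    gcongr
    exact sub_le_self _ zero_le_two
  obtain ⟨o, ho, outflow⟩ := exists_isOrientation_sum_eq sum_p parity sum_le
  obtain ⟨f, hf, skew, conserves⟩ :=
    (ho.isFeasible_flowCapacity hk (by simpa only [outflow] using hcut)).exists_skew_le (by simp)
  exact ho.hasNowhereZeroFlow_of_le_flowCapacity skew conserves hf

end Jaeger

section BalancedValuation

variable {G : SimpleGraph V}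

theorem balancedValuation_iff_forall_finset [Finite V] {f : V → ℝ} : BalancedValuation G f ↔
    ∀ X : Finset V, |∑ v ∈ X, f v| ≤ (edgeCut G (X : Set V)).ncard := by
  classical
  cases nonempty_fintype V
  refine ⟨fun h X => by simpa only [finsum_mem_coe_finset] using h X, fun h X => ?_⟩
  simpa only [finsum_mem_eq_toFinset_sum, Set.coe_toFinset] using h X.toFinset

theorem ncard_edgeCut_singleton_le_degree [Fintype V] [DecidableRel G.Adj] (v : V) :
    (edgeCut G {v}).ncard ≤ G.degree v := by
  classical
  have : cutSum (fun u w => G.adjMatrix ℤ u w) {v} ≤ G.degree v := by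
    rw [← sum_adjMatrix_apply, cutSum, Finset.sum_product, Finset.sum_singleton]
    exact Finset.sum_le_univ_sum_of_nonneg fun w => by rw [adjMatrix_apply]; split_ifs <;> simp
  rw [cutSum_adjMatrix, Finset.coe_singleton] at this
  exact_mod_cast this

theorem BalancedValuation.abs_le_degree [Fintype V] [DecidableRel G.Adj] {f : V → ℝ}
    (hf : BalancedValuation G f) (v : V) : |f v| ≤ G.degree v := by
  have := hf {v}
  rw [finsum_mem_singleton] at this
  exact this.trans (mod_cast ncard_edgeCut_singleton_le_degree v)

/-- Jaeger's theorem. -/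
theorem hasNowhereZeroFlow_iff_exists_balancedValuation [Fintype V] [DecidableRel G.Adj]
    {k : ℕ} (hk : 2 < k) : HasNowhereZeroFlow G k ↔ ∃ p : V → ℤ, (∀ v, Even (p v - G.degree v)) ∧
      BalancedValuation G fun v => (k / (k - 2) : ℝ) * p v := by
  have k_sub_pos : (0 : ℝ) < k - 2 := sub_pos.2 (mod_cast hk)
  rw [hasNowhereZeroFlow_iff_exists_mul_abs_sum_le hk.le]
  refine exists_congr fun p => and_congr_right fun _ => ?_
  rw [balancedValuation_iff_forall_finset]
  refine forall_congr' fun X => ?_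
  rw [← Finset.mul_sum, abs_mul, abs_of_nonneg (div_nonneg k.cast_nonneg k_sub_pos.le),
    div_mul_eq_mul_div, div_le_iff₀' k_sub_pos]
  exact_mod_cast Iff.rfl

theorem finsum_mem_ite_neg [Finite V] (A X : Set V) [DecidablePred (· ∈ A)] (c : ℝ) :
    ∑ᶠ v ∈ X, (if v ∈ A then c else -c) = c * ((X ∩ A).ncard - (X ∩ Aᶜ).ncard) := by
  classical
  cases nonempty_fintype V
  have sum_inter : ∑ᶠ v ∈ X ∩ A, (if v ∈ A then c else -c) = (X ∩ A).ncard * c := by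
    rw [finsum_mem_congr rfl fun v hv => if_pos hv.2, finsum_mem_eq_toFinset_sum,
      Finset.sum_const, nsmul_eq_mul, Set.ncard_eq_toFinset_card']
  have sum_sdiff : ∑ᶠ v ∈ X \ A, (if v ∈ A then c else -c) = (X \ A).ncard * -c := by
    rw [finsum_mem_congr rfl fun v hv => if_neg hv.2, finsum_mem_eq_toFinset_sum,
      Finset.sum_const, nsmul_eq_mul, Set.ncard_eq_toFinset_card']
  rw [← finsum_mem_inter_add_sdiff A X.toFinite, sum_inter, sum_sdiff, Set.sdiff_eq]
  ring

theorem balancedValuation_ite_neg_iff [Finite V] (A : Set V) [DecidablePred (· ∈ A)] {c : ℝ}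
    (hc : 0 ≤ c) :
    (BalancedValuation G fun v => if v ∈ A then c else -c) ↔ ∀ X : Set V,
      c * |((X ∩ A).ncard : ℝ) - ((X ∩ Aᶜ).ncard : ℝ)| ≤ ((edgeCut G X).ncard : ℝ) := by
  simp only [BalancedValuation, finsum_mem_ite_neg, abs_mul, abs_of_nonneg hc]

theorem exists_balancedValuation_iff_exists_partition [Finite V] {c : ℝ} (hc : 0 ≤ c) :
    (∃ f : V → ℝ, BalancedValuation G f ∧ ∀ v, f v = -c ∨ f v = c) ↔
      ∃ A B : Set V, A ∪ B = Set.univ ∧ A ∩ B = ∅ ∧ ∀ X : Set V,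
        c * |((X ∩ A).ncard : ℝ) - ((X ∩ B).ncard : ℝ)| ≤ ((edgeCut G X).ncard : ℝ) := by
  classical
  constructor
  · rintro ⟨f, hf, values⟩
    have f_eq : f = fun v => if v ∈ {v | f v = c} then c else -c := by
      funext v
      split_ifs with h
      · exact h
      · exact (values v).resolve_right h
    rw [f_eq, balancedValuation_ite_neg_iff _ hc] at hf
    exact ⟨_, _, Set.union_compl_self _, Set.inter_compl_self _, hf⟩
  · rintro ⟨A, B, union_eq, inter_eq, hX⟩
    have compl_eq : Aᶜ = B :=
      IsCompl.compl_eq ⟨Set.disjoint_iff_inter_eq_empty.2 inter_eq, codisjoint_iff.2 union_eq⟩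
    rw [← compl_eq, ← balancedValuation_ite_neg_iff A hc] at hX
    exact ⟨_, hX, fun v => (ite_eq_or_eq _ _ _).symm⟩

end BalancedValuation

section Cubic

variable [Fintype V] {G : SimpleGraph V}

theorem IsCubic.degree_eq [DecidableRel G.Adj] (hG : IsCubic G) (v : V) : G.degree v = 3 := by
  rw [← hG v, ← card_neighborSet_eq_degree, Set.ncard_eq_toFinset_card', Set.toFinset_card]

theorem IsCubic.eq_one_or_neg_one [DecidableRel G.Adj] (hG : IsCubic G) {p : V → ℤ} {c : ℝ}
    (hc : 1 < c) {v : V} (parity : Even (p v - G.degree v))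
    (hp : BalancedValuation G fun v => c * p v) : p v = 1 ∨ p v = -1 := by
  have abs_cast_lt : |(p v : ℝ)| < 3 := by
    have abs_le := hp.abs_le_degree v
    rw [hG.degree_eq, abs_mul, abs_of_pos (one_pos.trans hc), Nat.cast_ofNat] at abs_le
    nlinarith
  have abs_lt : |p v| < 3 := mod_cast abs_cast_lt
  rw [hG.degree_eq, Int.even_iff] at parity
  rw [_root_.abs_lt] at abs_lt
  omega

theorem IsCubic.hasNowhereZeroFlow_iff_exists_balancedValuation (hG : IsCubic G) {k : ℕ}
    (hk : 2 < k) : HasNowhereZeroFlow G k ↔ ∃ f : V → ℝ, BalancedValuation G f ∧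
      ∀ v, f v = -(k / (k - 2)) ∨ f v = k / (k - 2) := by
  classical
  have k_sub_pos : (0 : ℝ) < k - 2 := sub_pos.2 (mod_cast hk)
  have one_lt : 1 < (k : ℝ) / (k - 2) := (one_lt_div k_sub_pos).2 (sub_lt_self _ two_pos)
  rw [_root_.hasNowhereZeroFlow_iff_exists_balancedValuation hk]
  constructor
  · rintro ⟨p, parity, hp⟩
    refine ⟨_, hp, fun v => ?_⟩
    rcases hG.eq_one_or_neg_one one_lt (parity v) hp with h | h <;> simp [h]
  · rintro ⟨f, hf, values⟩
    choose p f_eq p_eq using fun v => show ∃ n : ℤ, f v = k / (k - 2) * n ∧ (n = -1 ∨ n = 1) from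
      (values v).elim (fun h => ⟨-1, by simp [h]⟩) (fun h => ⟨1, by simp [h]⟩)
    refine ⟨p, fun v => ?_, funext f_eq ▸ hf⟩
    rw [hG.degree_eq]
    rcases p_eq v with h | h <;> rw [h] <;> decide

end Cubic

theorem statement2_general [Fintype V] (G : SimpleGraph V) (hcubic : IsCubic G) {k : ℕ}
    (hk : 2 < k) :
    (HasNowhereZeroFlow G k ↔
      ∃ f : V → ℝ, BalancedValuation G f ∧
        ∀ v, f v = -(k / (k - 2)) ∨ f v = k / (k - 2)) ∧
    (HasNowhereZeroFlow G k ↔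
      ∃ A B : Set V, A ∪ B = Set.univ ∧ A ∩ B = ∅ ∧
        ∀ X : Set V,
          (k / (k - 2) : ℝ) * |((X ∩ A).ncard : ℝ) - ((X ∩ B).ncard : ℝ)|
            ≤ ((edgeCut G X).ncard : ℝ)) := by
  have valuation := hcubic.hasNowhereZeroFlow_iff_exists_balancedValuation hk
  have two_le : (2 : ℝ) ≤ k := mod_cast hk.le
  exact ⟨valuation, valuation.trans <| exists_balancedValuation_iff_exists_partition <|
    div_nonneg k.cast_nonneg (sub_nonneg.2 two_le)⟩

/-- A cubic graph has a nowhere-zero 5-flow iff it admits a balanced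
valuation with values ±5/3; equivalently, iff there is a partition `V = A ∪ B` with
`(5/3)·||X∩A| − |X∩B|| ≤ |∂_G(X)|` for every `X ⊆ V`. -/
theorem statement2 [Fintype V] (G : SimpleGraph V) (hcubic : IsCubic G) :
    (HasNowhereZeroFlow G 5 ↔
      ∃ f : V → ℝ, BalancedValuation G f ∧
        ∀ v, f v = -(5/3) ∨ f v = 5/3) ∧
    (HasNowhereZeroFlow G 5 ↔
      ∃ A B : Set V, A ∪ B = Set.univ ∧ A ∩ B = ∅ ∧
        ∀ X : Set V,
          (5/3 : ℝ) * |((X ∩ A).ncard : ℝ) - ((X ∩ B).ncard : ℝ)|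
            ≤ ((edgeCut G X).ncard : ℝ)) := by
  have values : ((5 : ℕ) : ℝ) / ((5 : ℕ) - 2) = 5 / 3 := by norm_num
  simpa only [values] using statement2_general G hcubic (k := 5) (by norm_num)
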